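/- For every σ > 0 and q ∈ (0,1], the PLRV L_{σ,q} of a single iteration of the Poisson subsampled Gaussian mechanism satisfies E(L_{σ,q}) ≥ q²/(2σ²). -/

import Mathlib

open MeasureTheory ProbabilityTheory Real Filter

/-!
The mean of the privacy loss is the Kullback–Leibler divergence of the mixture `P = P_{σ,q}`
from `Q = N(0,σ²)`. Let `R = N(q,σ²)`, the Gaussian with the same mean as `P`, with density `ψ`.
Then `KL(P‖Q) = KL(P‖R) + E_P[log (ψ/φ)]`; the first term is nonnegative, and since
`log (ψ(t)/φ(t)) = q t/σ² - q²/(2σ²)` is affine in `t` and `E_P[t] = q`, the second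
equals `q²/(2σ²)`.

This is carried out pointwise: `log x ≥ 1 - 1/x` gives
`p · log (p/φ) ≥ p · (q t/σ² - q²/(2σ²)) + p - ψ` (`mixDensity_mul_plrv_ge`), and this is
integrated over `ℝ`. Integrability of the left-hand side is needed because the Bochner integral
of a non-integrable function is `0`; it holds because `|log (p/φ)|` is at most
`|2t - 1|/(2σ²)` (`abs_plrv_le`).
-/

/-- Density of the dominating-pair mixture `P_{σ,q}` for the Poisson subsampled Gaussian
mechanism with sensitivity 1: `p_{σ,q}(t) = q·φ_σ(t−1) + (1−q)·φ_σ(t)`. -/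
noncomputable def mixDensity (σ q t : ℝ) : ℝ :=
  q * gaussianPDFReal 1 (σ ^ 2).toNNReal t + (1 - q) * gaussianPDFReal 0 (σ ^ 2).toNNReal t

/-- The mixture measure `P_{σ,q}`. -/
noncomputable def mixMeasure (σ q : ℝ) : Measure ℝ :=
  MeasureTheory.volume.withDensity fun t => ENNReal.ofReal (mixDensity σ q t)

/-- The privacy loss function `t ↦ ln(p_{σ,q}(t)/φ_σ(t))`. -/
noncomputable def plrv (σ q t : ℝ) : ℝ :=
  Real.log (mixDensity σ q t / gaussianPDFReal 0 (σ ^ 2).toNNReal t)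

lemma integrable_id_mul_gaussianPDFReal (μ : ℝ) {v : NNReal} (hv : v ≠ 0) :
    Integrable (fun t => t * gaussianPDFReal μ v t) := by
  have h : Integrable (fun t : ℝ => t) (gaussianReal μ v) :=
    (memLp_id_gaussianReal (μ := μ) (v := v) 1).integrable (by norm_num)
  rw [gaussianReal_of_var_ne_zero _ hv,
    integrable_withDensity_iff (measurable_gaussianPDF μ v)
      (ae_of_all _ fun _ => gaussianPDF_lt_top)] at h
  simpa only [toReal_gaussianPDF] using h

lemma integral_id_mul_gaussianPDFReal (μ : ℝ) {v : NNReal} (hv : v ≠ 0) :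
    ∫ t, t * gaussianPDFReal μ v t = μ := by
  have h := integral_id_gaussianReal (μ := μ) (v := v)
  rw [integral_gaussianReal_eq_integral_smul hv] at h
  simpa only [smul_eq_mul, mul_comm] using h

/-- The likelihood ratio of two Gaussians with the same variance. -/
lemma gaussianPDFReal_eq_exp_mul {σ : ℝ} (hσ : 0 < σ) (m t : ℝ) :
    gaussianPDFReal m (σ ^ 2).toNNReal t =
      exp (m * t / σ ^ 2 - m ^ 2 / (2 * σ ^ 2)) * gaussianPDFReal 0 (σ ^ 2).toNNReal t := by
  simp only [gaussianPDFReal, Real.coe_toNNReal _ (sq_nonneg σ)]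
  rw [mul_left_comm, ← Real.exp_add]
  congr 2
  field_simp
  ring

lemma toNNReal_sq_ne_zero {σ : ℝ} (hσ : 0 < σ) : (σ ^ 2).toNNReal ≠ 0 := by
  have : 0 < (σ ^ 2).toNNReal := Real.toNNReal_pos.2 (by positivity)
  exact this.ne'

lemma mixDensity_pos {σ q : ℝ} (hσ : 0 < σ) (hq : q ∈ Set.Ioc (0 : ℝ) 1) (t : ℝ) :
    0 < mixDensity σ q t := by
  have h1 := gaussianPDFReal_pos 1 _ t (toNNReal_sq_ne_zero hσ)
  have h0 := gaussianPDFReal_pos 0 _ t (toNNReal_sq_ne_zero hσ)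
  exact add_pos_of_pos_of_nonneg (mul_pos hq.1 h1)
    (mul_nonneg (sub_nonneg.2 hq.2) h0.le)

lemma measurable_mixDensity (σ q : ℝ) : Measurable (mixDensity σ q) :=
  ((measurable_gaussianPDFReal _ _).const_mul _).add
    ((measurable_gaussianPDFReal _ _).const_mul _)

lemma plrv_eq {σ : ℝ} (hσ : 0 < σ) (q t : ℝ) :
    plrv σ q t = log (q * exp ((2 * t - 1) / (2 * σ ^ 2)) + (1 - q)) := by
  have h0 := gaussianPDFReal_pos 0 _ t (toNNReal_sq_ne_zero hσ)
  have he : 1 * t / σ ^ 2 - 1 ^ 2 / (2 * σ ^ 2) = (2 * t - 1) / (2 * σ ^ 2) := by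
    field_simp
  rw [plrv, mixDensity, gaussianPDFReal_eq_exp_mul hσ 1 t, he]
  congr 1
  field_simp

/-- The likelihood ratio is a convex combination of `1` and `exp x`, where
`x = (2t - 1)/(2σ²)`, so its logarithm lies between `0` and `x`. -/
lemma abs_plrv_le {σ q : ℝ} (hσ : 0 < σ) (hq : q ∈ Set.Ioc (0 : ℝ) 1) (t : ℝ) :
    |plrv σ q t| ≤ |(2 * t - 1) / (2 * σ ^ 2)| := by
  rw [plrv_eq hσ]
  set x := (2 * t - 1) / (2 * σ ^ 2)
  obtain ⟨hq0, hq1⟩ := hq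
  have hpos : 0 < q * exp x + (1 - q) := by
    have := mul_pos hq0 (exp_pos x)
    linarith
  rcases le_total 0 x with hx | hx
  · have h1 : 1 ≤ exp x := Real.one_le_exp hx
    have hlo : 0 ≤ log (q * exp x + (1 - q)) := Real.log_nonneg (by nlinarith)
    rw [abs_of_nonneg hlo, abs_of_nonneg hx, Real.log_le_iff_le_exp hpos]
    nlinarith
  · have h1 : exp x ≤ 1 := Real.exp_le_one_iff.2 hx
    have hhi : log (q * exp x + (1 - q)) ≤ 0 := Real.log_nonpos hpos.le (by nlinarith)
    rw [abs_of_nonpos hhi, abs_of_nonpos hx, neg_le_neg_iff, Real.le_log_iff_exp_le hpos]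
    nlinarith

/-- The pointwise inequality behind `KL(P‖Q) ≥ E_P[log (ψ/φ)]`, where `ψ` is the density
of `N(q,σ²)`. -/
lemma mixDensity_mul_plrv_ge {σ q : ℝ} (hσ : 0 < σ) (hq : q ∈ Set.Ioc (0 : ℝ) 1) (t : ℝ) :
    mixDensity σ q t * (q * t / σ ^ 2 - q ^ 2 / (2 * σ ^ 2)) + mixDensity σ q t
      - gaussianPDFReal q (σ ^ 2).toNNReal t ≤ mixDensity σ q t * plrv σ q t := by
  have hp := mixDensity_pos hσ hq t
  have h0 := gaussianPDFReal_pos 0 _ t (toNNReal_sq_ne_zero hσ)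
  rw [gaussianPDFReal_eq_exp_mul hσ q t, plrv]
  set y := q * t / σ ^ 2 - q ^ 2 / (2 * σ ^ 2)
  set p := mixDensity σ q t
  set b := gaussianPDFReal 0 (σ ^ 2).toNNReal t
  have hr : 0 < p / (exp y * b) := by positivity
  have hlog := Real.one_sub_inv_le_log_of_pos hr
  have hsplit : log (p / (exp y * b)) = log (p / b) - y := by
    rw [Real.log_div hp.ne' (by positivity), Real.log_mul (exp_pos y).ne' h0.ne',
      Real.log_exp, Real.log_div hp.ne' h0.ne']
    ring
  rw [hsplit, inv_div] at hlog
  have h := mul_le_mul_of_nonneg_left hlog hp.le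
  have hc : p * (exp y * b / p) = exp y * b := by field_simp
  linarith

lemma integrable_mixDensity (σ q : ℝ) : Integrable (mixDensity σ q) :=
  ((integrable_gaussianPDFReal _ _).const_mul _).add
    ((integrable_gaussianPDFReal _ _).const_mul _)

lemma id_mul_mixDensity (σ q : ℝ) :
    (fun t => t * mixDensity σ q t) =
      fun t => q * (t * gaussianPDFReal 1 (σ ^ 2).toNNReal t) +
        (1 - q) * (t * gaussianPDFReal 0 (σ ^ 2).toNNReal t) := by
  ext t
  rw [mixDensity]
  ring

lemma integrable_id_mul_mixDensity {σ : ℝ} (hσ : 0 < σ) (q : ℝ) :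
    Integrable (fun t => t * mixDensity σ q t) := by
  have hv := toNNReal_sq_ne_zero hσ
  rw [id_mul_mixDensity]
  exact ((integrable_id_mul_gaussianPDFReal 1 hv).const_mul _).add
    ((integrable_id_mul_gaussianPDFReal 0 hv).const_mul _)

lemma integral_mixDensity {σ : ℝ} (hσ : 0 < σ) (q : ℝ) : ∫ t, mixDensity σ q t = 1 := by
  have hv := toNNReal_sq_ne_zero hσ
  simp only [mixDensity]
  rw [integral_add ((integrable_gaussianPDFReal _ _).const_mul _)
    ((integrable_gaussianPDFReal _ _).const_mul _), integral_const_mul, integral_const_mul,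
    integral_gaussianPDFReal_eq_one _ hv, integral_gaussianPDFReal_eq_one _ hv]
  ring

lemma integral_id_mul_mixDensity {σ : ℝ} (hσ : 0 < σ) (q : ℝ) :
    ∫ t, t * mixDensity σ q t = q := by
  have hv := toNNReal_sq_ne_zero hσ
  rw [id_mul_mixDensity, integral_add ((integrable_id_mul_gaussianPDFReal 1 hv).const_mul _)
    ((integrable_id_mul_gaussianPDFReal 0 hv).const_mul _), integral_const_mul,
    integral_const_mul, integral_id_mul_gaussianPDFReal _ hv,
    integral_id_mul_gaussianPDFReal _ hv]
  ring

lemma integrable_mixDensity_mul_plrv {σ q : ℝ} (hσ : 0 < σ) (hq : q ∈ Set.Ioc (0 : ℝ) 1) :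
    Integrable (fun t => mixDensity σ q t * plrv σ q t) := by
  have hdom : Integrable (fun t => (σ ^ 2)⁻¹ * (t * mixDensity σ q t)
      - (2 * σ ^ 2)⁻¹ * mixDensity σ q t) :=
    ((integrable_id_mul_mixDensity hσ q).const_mul _).sub
      ((integrable_mixDensity σ q).const_mul _)
  refine hdom.mono ?_ (ae_of_all _ fun t => ?_)
  · have hm : Measurable (plrv σ q) :=
      ((measurable_mixDensity σ q).div (measurable_gaussianPDFReal _ _)).log
    exact ((measurable_mixDensity σ q).mul hm).aestronglyMeasurable
  · have he : (σ ^ 2)⁻¹ * (t * mixDensity σ q t) - (2 * σ ^ 2)⁻¹ * mixDensity σ q t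
        = mixDensity σ q t * ((2 * t - 1) / (2 * σ ^ 2)) := by
      field_simp
    rw [he, norm_mul, norm_mul]
    exact mul_le_mul_of_nonneg_left (abs_plrv_le hσ hq t) (norm_nonneg _)

/-- The mean of the PLRV of a single iteration of the Poisson subsampled Gaussian mechanism
is at least `q²/(2σ²)`. -/
theorem plrv_mean_lower_bound (σ q : ℝ) (hσ : 0 < σ) (hq : q ∈ Set.Ioc (0 : ℝ) 1) :
    q ^ 2 / (2 * σ ^ 2) ≤ ∫ t, plrv σ q t ∂(mixMeasure σ q) := by
  have hv := toNNReal_sq_ne_zero hσ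
  have hP : ∫ t, plrv σ q t ∂(mixMeasure σ q) = ∫ t, mixDensity σ q t * plrv σ q t := by
    rw [mixMeasure, integral_withDensity_eq_integral_toReal_smul
      (measurable_mixDensity σ q).ennreal_ofReal (ae_of_all _ fun _ => ENNReal.ofReal_lt_top)]
    refine integral_congr_ae (ae_of_all _ fun t => ?_)
    simp only [smul_eq_mul]
    rw [ENNReal.toReal_ofReal (mixDensity_pos hσ hq t).le]
  have h1 := (integrable_id_mul_mixDensity hσ q).const_mul (q / σ ^ 2)
  have h2 := (integrable_mixDensity σ q).const_mul (1 - q ^ 2 / (2 * σ ^ 2))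
  have h3 := integrable_gaussianPDFReal q (σ ^ 2).toNNReal
  have hlower : ∫ t, (q / σ ^ 2 * (t * mixDensity σ q t)
      + (1 - q ^ 2 / (2 * σ ^ 2)) * mixDensity σ q t
      - gaussianPDFReal q (σ ^ 2).toNNReal t) = q ^ 2 / (2 * σ ^ 2) := by
    rw [integral_sub (by exact h1.add h2) h3, integral_add h1 h2, integral_const_mul,
      integral_const_mul, integral_id_mul_mixDensity hσ, integral_mixDensity hσ,
      integral_gaussianPDFReal_eq_one _ hv]
    field_simp
    ring
  rw [hP, ← hlower]
  refine integral_mono ((h1.add h2).sub h3) (integrable_mixDensity_mul_plrv hσ hq) fun t => ?_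
  refine le_trans (le_of_eq ?_) (mixDensity_mul_plrv_ge hσ hq t)
  ring
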